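/- Let A be a TGBA over AP' and T a Kripke structure over AP ⊇ AP'. If the synchronized product A⊗T has an accepting run, then the Self-Loop Aggregation Product A⊠T has an accepting run. -/

import Mathlib

open scoped Classical

/-- Boolean formulas over atomic propositions of type `α`. -/
inductive BForm (α : Type) : Type
  | tru : BForm α
  | fls : BForm α
  | var : α → BForm α
  | band : BForm α → BForm α → BForm α
  | bor : BForm α → BForm α → BForm α
  | bnot : BForm α → BForm α

namespace BForm

variable {α : Type}

/-- Evaluation of a Boolean formula under an assignment. -/
def eval : BForm α → (α → Bool) → Bool
  | tru, _ => true
  | fls, _ => false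
  | var a, ρ => ρ a
  | band f g, ρ => f.eval ρ && g.eval ρ
  | bor f g, ρ => f.eval ρ || g.eval ρ
  | bnot f, ρ => !(f.eval ρ)

/-- Free variables (occurring atomic propositions) of a Boolean formula. -/
def FV : BForm α → Set α
  | tru => ∅
  | fls => ∅
  | var a => {a}
  | band f g => f.FV ∪ g.FV
  | bor f g => f.FV ∪ g.FV
  | bnot f => f.FV

/-- Satisfiability of a Boolean formula. -/
def Sat (f : BForm α) : Prop := ∃ ρ : α → Bool, f.eval ρ = true

/-- The literal describing the value of the assignment `ρ` on the proposition `a`. -/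
def lit (ρ : α → Bool) (a : α) : BForm α := if ρ a then var a else bnot (var a)

end BForm

/-- The formula (a conjunction of literals) encoding the restriction of the
assignment `ρ` to the finite set `AP`: the interpretation of an assignment
as a Boolean formula. -/
noncomputable def assignForm {α : Type} (AP : Finset α) (ρ : α → Bool) : BForm α :=
  (AP.toList.map (BForm.lit ρ)).foldr BForm.band BForm.tru

/-- `ρ ≡_E ρ'`: the two assignments agree on all propositions of `E`. -/
def AgreeOn {α : Type} (E : Set α) (ρ ρ' : α → Bool) : Prop := ∀ a ∈ E, ρ a = ρ' a

/-- Restriction of an assignment to the set `E` (`false` outside of `E`). -/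
noncomputable def restrS {α : Type} (E : Set α) (ρ : α → Bool) : α → Bool :=
  fun p => if p ∈ E then ρ p else false

/-- A Transition-based Generalized Büchi Automaton over atomic propositions
drawn from `α`, with alphabet `AP`, state set `Q`, acceptance conditions `F`,
transition relation `δ ⊆ Q × B(AP) × 2^F × Q` and initial state `init`. -/
structure TGBA (α : Type) where
  AP : Finset α
  Q : Type
  F : Type
  init : Q
  δ : Set (Q × BForm α × Set F × Q)

/-- A Kripke structure over atomic propositions drawn from `α`, with alphabet
`AP`, states `S` labeled by assignments via `lab`, transition relation `Δ`
and initial state `init`. -/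
structure Kripke (α : Type) where
  AP : Finset α
  S : Type
  lab : S → α → Bool
  Δ : Set (S × S)
  init : S

namespace TGBA

variable {α : Type}

/-- Well-formedness: every transition label is a satisfiable formula over `AP`. -/
def WF (A : TGBA α) : Prop := ∀ t ∈ A.δ, (t.2.1).FV ⊆ ↑A.AP ∧ (t.2.1).Sat

/-- A run: an infinite sequence of consecutive transitions starting at the
initial state. -/
def IsRun (A : TGBA α) (π : ℕ → A.Q × BForm α × Set A.F × A.Q) : Prop :=
  (π 0).1 = A.init ∧ ∀ i, π i ∈ A.δ ∧ (π i).2.2.2 = (π (i + 1)).1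

/-- An accepting run: a run visiting every acceptance condition infinitely often. -/
def IsAccRun (A : TGBA α) (π : ℕ → A.Q × BForm α × Set A.F × A.Q) : Prop :=
  A.IsRun π ∧ ∀ c : A.F, ∀ i : ℕ, ∃ j, i ≤ j ∧ c ∈ (π j).2.2.1

/-- `Acc(A) ≠ ∅`: the automaton has an accepting run. -/
def HasAccRun (A : TGBA α) : Prop := ∃ π, A.IsAccRun π

/-- The language of the TGBA: the infinite words compatible with some accepting run. -/
def Lang (A : TGBA α) : Set (ℕ → α → Bool) :=
  {w | ∃ π, A.IsAccRun π ∧ ∀ i, ((π i).2.1).eval (w i) = true}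

/-- One-step successor relation between automaton states. -/
def Step (A : TGBA α) (q q' : A.Q) : Prop := ∃ f ac, (q, f, ac, q') ∈ A.δ

/-- Reachability between automaton states. -/
def Reach (A : TGBA α) : A.Q → A.Q → Prop := Relation.ReflTransGen A.Step

/-- `FV(q)`: the union of the free variables of the labels of all transitions
reachable from `q`. -/
def FVq (A : TGBA α) (q : A.Q) : Set α :=
  {p | ∃ t ∈ A.δ, A.Reach q t.1 ∧ p ∈ (t.2.1).FV}

/-- There is some transition between the two states. -/
def HasTrans (A : TGBA α) (p₁ p₂ : A.Q) : Prop := ∃ f ac, (p₁, f, ac, p₂) ∈ A.δ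

/-- There is a transition with acceptance set `ac` between the two states. -/
def HasTransAc (A : TGBA α) (p₁ : A.Q) (ac : Set A.F) (p₂ : A.Q) : Prop :=
  ∃ f, (p₁, f, ac, p₂) ∈ A.δ

end TGBA

/-- Prepend a finite word to an infinite word. -/
def appendω {β : Type} (u : List β) (v : ℕ → β) : ℕ → β := fun n =>
  if h : n < u.length then u.get ⟨n, h⟩ else v (n - u.length)

/-- A language of infinite words is stuttering-invariant. -/
def StutterInvariantLang {β : Type} (L : Set (ℕ → β)) : Prop :=
  ∀ (u : List β) (ρ : β) (v : ℕ → β), appendω (u ++ [ρ]) v ∈ L ↔ appendω (u ++ [ρ, ρ]) v ∈ L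

/-- A TGBA is stuttering-invariant iff its language is. -/
def TGBA.StutterInvariant {α : Type} (A : TGBA α) : Prop := StutterInvariantLang A.Lang

/-- Two infinite words are stuttering equivalent: they are equal after collapsing
consecutive repeated letters, as witnessed by matching block decompositions. -/
def StutterEquiv {β : Type} (w w' : ℕ → β) : Prop :=
  ∃ ι κ : ℕ → ℕ, ι 0 = 0 ∧ κ 0 = 0 ∧ StrictMono ι ∧ StrictMono κ ∧
    ∀ k i j, ι k ≤ i → i < ι (k + 1) → κ k ≤ j → j < κ (k + 1) → w i = w' j

/-- Two languages are stuttering equivalent: every word of either language is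
stuttering equivalent to some word of the other. -/
def LangStutterEquiv {β : Type} (L L' : Set (ℕ → β)) : Prop :=
  (∀ w ∈ L, ∃ w' ∈ L', StutterEquiv w w') ∧ ∀ w' ∈ L', ∃ w ∈ L, StutterEquiv w w'

namespace Kripke

variable {α : Type}

/-- `SuccF(a, P)`: successors of states of `a`, filtered to keep only those
whose label satisfies `P`. -/
def SuccF (T : Kripke α) (a : Set T.S) (P : (α → Bool) → Prop) : Set T.S :=
  {s' | ∃ s ∈ a, (s, s') ∈ T.Δ ∧ P (T.lab s')}

/-- `ReachF(a, P)`: the least superset of `a` closed under `SuccF(·, P)`. -/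
def ReachF (T : Kripke α) (a : Set T.S) (P : (α → Bool) → Prop) : Set T.S :=
  ⋂₀ {b | a ⊆ b ∧ T.SuccF b P ⊆ b}

/-- `FSucc(a, P)`: successors of the states of `a` whose label satisfies `P`. -/
def FSucc (T : Kripke α) (a : Set T.S) (P : (α → Bool) → Prop) : Set T.S :=
  {s' | ∃ s ∈ a, (s, s') ∈ T.Δ ∧ P (T.lab s)}

/-- `FReach(a, P)`: the least superset of `a` closed under `FSucc(·, P)`. -/
def FReach (T : Kripke α) (a : Set T.S) (P : (α → Bool) → Prop) : Set T.S :=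
  ⋂₀ {b | a ⊆ b ∧ T.FSucc b P ⊆ b}

/-- The label of (a representative state of) an aggregate. -/
noncomputable def aggLab (T : Kripke α) (a : Set T.S) : α → Bool :=
  if h : a.Nonempty then T.lab h.some else fun _ => false

/-- Homogeneity of a set of states w.r.t. the observed propositions `E`. -/
def Homog (T : Kripke α) (E : Set α) (a : Set T.S) : Prop :=
  ∀ s ∈ a, ∀ s' ∈ a, AgreeOn E (T.lab s) (T.lab s')

/-- `a` is a (nonempty, homogeneous, saturated) aggregate w.r.t. `E`. -/
def IsAgg (T : Kripke α) (E : Set α) (a : Set T.S) : Prop :=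
  a.Nonempty ∧ T.Homog E a ∧ a = T.ReachF a fun ρ => AgreeOn E ρ (T.aggLab a)

/-- `a` contains a cycle of `Δ`. -/
def HasCycle (T : Kripke α) (a : Set T.S) : Prop :=
  ∃ s ∈ a, Relation.TransGen (fun x y => x ∈ a ∧ y ∈ a ∧ (x, y) ∈ T.Δ) s s

end Kripke

/-- Transition relation of the synchronized product `A ⊗ T`. -/
def synchδ {α : Type} (A : TGBA α) (T : Kripke α) :
    Set ((A.Q × T.S) × BForm α × Set A.F × (A.Q × T.S)) :=
  {t | ∃ (q₁ q₂ : A.Q) (s₁ s₂ : T.S) (ac : Set A.F),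
    t = ((q₁, s₁), assignForm T.AP (T.lab s₁), ac, (q₂, s₂)) ∧ (s₁, s₂) ∈ T.Δ ∧
    ∃ g : BForm α, (q₁, g, ac, q₂) ∈ A.δ ∧ g.eval (T.lab s₁) = true}

/-- The synchronized product `A ⊗ T` of a TGBA and a Kripke structure. -/
def synchProd {α : Type} (A : TGBA α) (T : Kripke α) : TGBA α where
  AP := T.AP
  Q := A.Q × T.S
  F := A.F
  init := (A.init, T.init)
  δ := synchδ A T

/-- The stuttering synchronized product `A ⊗̃ T`: the synchronized product
together with the extra stuttering transitions. -/
def stutProd {α : Type} (A : TGBA α) (T : Kripke α) : TGBA α where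
  AP := T.AP
  Q := A.Q × T.S
  F := A.F
  init := (A.init, T.init)
  δ := synchδ A T ∪
    {t | ∃ q₁ s₁ s₂,
      t = ((q₁, s₁), assignForm T.AP (T.lab s₁), (∅ : Set A.F), (q₁, s₂)) ∧
      (s₁, s₂) ∈ T.Δ ∧ AgreeOn (A.FVq q₁) (T.lab s₁) (T.lab s₂)}

/-- The Symbolic Observation Graph of `T` over the observed propositions `E`:
a Kripke structure whose states are aggregates (`Sum.inl`) and divergent
states (`Sum.inr`, assignments over `E`). -/
noncomputable def SOG {α : Type} (T : Kripke α) (E : Finset α) : Kripke α where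
  AP := E
  S := Set T.S ⊕ ({x // x ∈ E} → Bool)
  lab := fun x =>
    match x with
    | Sum.inl a => restrS ↑E (T.aggLab a)
    | Sum.inr l => fun p => if h : p ∈ E then l ⟨p, h⟩ else false
  Δ := {pr |
    (∃ a a' : Set T.S, pr = (Sum.inl a, Sum.inl a') ∧ T.IsAgg ↑E a ∧ T.IsAgg ↑E a' ∧
      a' = T.ReachF (T.SuccF a (fun ρ => AgreeOn ↑E ρ (T.aggLab a')) \ a)
          fun ρ => AgreeOn ↑E ρ (T.aggLab a')) ∨
    (∃ (a : Set T.S) (l : {x // x ∈ E} → Bool), pr = (Sum.inl a, Sum.inr l) ∧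
      T.IsAgg ↑E a ∧ T.HasCycle a ∧ ∀ p : {x // x ∈ E}, l p = T.aggLab a ↑p) ∨
    ∃ l : {x // x ∈ E} → Bool, pr = (Sum.inr l, Sum.inr l)}
  init := Sum.inl (T.ReachF {T.init} fun ρ => AgreeOn ↑E ρ (T.lab T.init))

/-- The finite set of propositions of `AP` observable from `q`. -/
noncomputable def fvFinset {α : Type} (A : TGBA α) (q : A.Q) : Finset α :=
  A.AP.filter fun p => p ∈ A.FVq q

/-- The Symbolic Observation Product `A ▷ T`: a TGBA whose states pair a state of
`A` with either an aggregate (`Sum.inl`) or a divergent state (`Sum.inr`, an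
assignment over `FV(q)`, canonically `false` outside `FV(q)`). -/
noncomputable def SOP {α : Type} (A : TGBA α) (T : Kripke α) : TGBA α where
  AP := A.AP
  Q := A.Q × (Set T.S ⊕ (α → Bool))
  F := A.F
  init := (A.init,
    Sum.inl (T.ReachF {T.init} fun ρ => AgreeOn (A.FVq A.init) ρ (T.lab T.init)))
  δ := {t |
    -- aggregate to aggregate
    (∃ (q₁ q₂ : A.Q) (a₁ a₂ : Set T.S) (ac : Set A.F),
      t = ((q₁, Sum.inl a₁), assignForm (fvFinset A q₁) (T.aggLab a₁), ac,
           (q₂, Sum.inl a₂)) ∧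
      T.IsAgg (A.FVq q₁) a₁ ∧ T.IsAgg (A.FVq q₂) a₂ ∧
      (∃ f : BForm α, (q₁, f, ac, q₂) ∈ A.δ ∧
        f.eval (restrS (A.FVq q₁) (T.aggLab a₁)) = true) ∧
      ∃ l' : α → Bool,
        a₂ = T.ReachF (T.SuccF a₁ (fun ρ => AgreeOn (A.FVq q₂) ρ l') \ a₁)
            fun ρ => AgreeOn (A.FVq q₂) ρ l') ∨
    -- aggregate to divergent
    (∃ (q₁ q₂ : A.Q) (a : Set T.S) (l₂ : α → Bool) (ac : Set A.F),
      t = ((q₁, Sum.inl a), assignForm (fvFinset A q₁) (T.aggLab a), ac,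
           (q₂, Sum.inr l₂)) ∧
      T.IsAgg (A.FVq q₁) a ∧ T.HasCycle a ∧
      l₂ = restrS (A.FVq q₂) (T.aggLab a) ∧
      ∃ f : BForm α, (q₁, f, ac, q₂) ∈ A.δ ∧
        f.eval (restrS (A.FVq q₁) (T.aggLab a)) = true) ∨
    -- divergent to divergent
    ∃ (q₁ q₂ : A.Q) (l₁ l₂ : α → Bool) (ac : Set A.F),
      t = ((q₁, Sum.inr l₁), assignForm (fvFinset A q₁) l₁, ac, (q₂, Sum.inr l₂)) ∧
      l₁ = restrS (A.FVq q₁) l₁ ∧ l₂ = restrS (A.FVq q₂) l₁ ∧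
      ∃ f : BForm α, (q₁, f, ac, q₂) ∈ A.δ ∧ f.eval l₁ = true}

/-- `SF(q, ac)` as a predicate on assignments: `ρ` satisfies the disjunction of
the labels of the self-loops on `q` whose acceptance sets are included in `ac`. -/
def SFpred {α : Type} (A : TGBA α) (q : A.Q) (ac : Set A.F) : (α → Bool) → Prop :=
  fun ρ => ∃ (f : BForm α) (ac' : Set A.F), (q, f, ac', q) ∈ A.δ ∧ ac' ⊆ ac ∧ f.eval ρ = true

/-- The Self-Loop Aggregation Product `A ⊠ T`. -/
def SLAP {α : Type} (A : TGBA α) (T : Kripke α) : TGBA α where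
  AP := ∅
  Q := A.Q × Set T.S
  F := A.F
  init := (A.init, T.FReach {T.init} (SFpred A A.init ∅))
  δ := {t | ∃ (q₁ q₂ : A.Q) (a₁ a₂ : Set T.S) (ac : Set A.F),
    t = ((q₁, a₁), BForm.tru, ac, (q₂, a₂)) ∧ a₁.Nonempty ∧ a₂.Nonempty ∧
    ∃ f : BForm α, (q₁, f, ac, q₂) ∈ A.δ ∧ (q₁ = q₂ → ac ≠ ∅) ∧
      a₂ = T.FReach (T.FSucc a₁ fun ρ => f.eval ρ = true) (SFpred A q₂ ac)}

/-!
Let an aggregate `a` at a state `q` of `A` follow a run of `A ⊗ T`, so that `a` contains the current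
Kripke state and is closed under the self-loops on `q` that carry no acceptance condition. Such a
self-loop leaves the Kripke state inside `a`, hence needs no move of `A ⊠ T`; every other transition
of the run is also one of `A ⊠ T`. So `A ⊠ T` simulates `A ⊗ T` up to stuttering on moves with an
empty acceptance set. Since there is an acceptance condition, an accepting run makes infinitely many
moves with a nonempty acceptance set, so erasing the stuttering leaves an infinite run of `A ⊠ T`,
which is still accepting.
-/

theorem eq_of_count_eq {β : Sort*} {x : ℕ → β} {p : ℕ → Prop} [DecidablePred p]
    (hx : ∀ n, ¬ p n → x (n + 1) = x n) {m n : ℕ} (h : Nat.count p m = Nat.count p n) :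
    x m = x n := by
  wlog hmn : m ≤ n generalizing m n
  · exact (this h.symm (le_of_not_ge hmn)).symm
  induction n, hmn using Nat.le_induction with
  | base => rfl
  | succ n hmn ih =>
    have hle : Nat.count p m ≤ Nat.count p n := Nat.count_monotone p hmn
    rw [Nat.count_succ] at h
    have hn : ¬ p n := fun hn => by rw [if_pos hn] at h; omega
    rw [hx n hn]
    exact ih (by rwa [if_neg hn] at h)

namespace TGBA

open Filter

variable {α β : Type} {A : TGBA α} {B : TGBA β}

theorem hasAccRun_iff : A.HasAccRun ↔ ∃ (x : ℕ → A.Q) (ac : ℕ → Set A.F), x 0 = A.init ∧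
    (∀ i, A.HasTransAc (x i) (ac i) (x (i + 1))) ∧ ∀ c, ∃ᶠ i in atTop, c ∈ ac i := by
  constructor
  · rintro ⟨π, ⟨hinit, hrun⟩, hacc⟩
    refine ⟨fun i => (π i).1, fun i => (π i).2.2.1, hinit, fun i => ⟨(π i).2.1, ?_⟩,
      fun c => frequently_atTop.2 (hacc c)⟩
    simpa only [← (hrun i).2] using (hrun i).1
  · rintro ⟨x, ac, hinit, htrans, hacc⟩
    choose f hf using htrans
    exact ⟨fun i => (x i, f i, ac i, x (i + 1)), ⟨hinit, fun i => ⟨hf i, rfl⟩⟩,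
      fun c => frequently_atTop.1 (hacc c)⟩

theorem hasAccRun_of_stuttering [Nonempty A.F] {x : ℕ → A.Q} {ac : ℕ → Set A.F}
    (hinit : x 0 = A.init)
    (hstep : ∀ i, A.HasTransAc (x i) (ac i) (x (i + 1)) ∨ x (i + 1) = x i ∧ ac i = ∅)
    (hacc : ∀ c, ∃ᶠ i in atTop, c ∈ ac i) : A.HasAccRun := by
  let p (i : ℕ) : Prop := A.HasTransAc (x i) (ac i) (x (i + 1))
  have hstutter (i : ℕ) (hi : ¬ p i) : x (i + 1) = x i ∧ ac i = ∅ := (hstep i).resolve_left hi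
  have hp_of_mem {c : A.F} {i : ℕ} (hc : c ∈ ac i) : p i := by
    by_contra hi
    rw [(hstutter i hi).2] at hc
    exact hc
  have hinf : {i | p i}.Infinite :=
    Nat.frequently_atTop_iff_infinite.1 ((hacc (Classical.arbitrary A.F)).mono fun _ => hp_of_mem)
  have hx {m n : ℕ} : Nat.count p m = Nat.count p n → x m = x n :=
    eq_of_count_eq fun i hi => (hstutter i hi).1
  refine hasAccRun_iff.2 ⟨fun k => x (Nat.nth p k), fun k => ac (Nat.nth p k), ?_, fun k => ?_,
    fun c => frequently_atTop.2 fun k => ?_⟩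
  · rw [← hinit]
    exact hx (by rw [Nat.count_nth_of_infinite hinf, Nat.count_zero])
  · have hnext : x (Nat.nth p k + 1) = x (Nat.nth p (k + 1)) :=
      hx (by rw [Nat.count_nth_succ_of_infinite hinf, Nat.count_nth_of_infinite hinf])
    simpa only [← hnext] using Nat.nth_mem_of_infinite hinf k
  · obtain ⟨j, hj, hc⟩ := frequently_atTop.1 (hacc c) (Nat.nth p k)
    refine ⟨Nat.count p j, ?_, by simpa only [Nat.nth_count (hp_of_mem hc)] using hc⟩
    rw [← Nat.count_nth_of_infinite hinf k]
    exact Nat.count_monotone p hj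

/-- Simulation of `A` by `B` up to stuttering: `B` answers every transition of `A` either by a
transition or, when no acceptance condition is met, by staying where it is. The map `φ` sends each
acceptance condition of `B` to the condition of `A` that it stands for; it is needed because the
acceptance conditions of a `TGBA` form a type that is part of the automaton. -/
structure IsStutterSimulation (A : TGBA α) (B : TGBA β) (φ : B.F → A.F) (R : A.Q → B.Q → Prop) :
    Prop where
  init : R A.init B.init
  step : ∀ {x x' : A.Q} {y : B.Q} {ac : Set A.F}, R x y → A.HasTransAc x ac x' →
    ∃ y', R x' y' ∧ (B.HasTransAc y (φ ⁻¹' ac) y' ∨ y' = y ∧ φ ⁻¹' ac = ∅)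

theorem IsStutterSimulation.hasAccRun [Nonempty B.F] {φ : B.F → A.F} {R : A.Q → B.Q → Prop}
    (hR : IsStutterSimulation A B φ R) (hA : A.HasAccRun) : B.HasAccRun := by
  obtain ⟨x, ac, hinit, htrans, hacc⟩ := hasAccRun_iff.1 hA
  have : Nonempty B.Q := ⟨B.init⟩
  choose! next hnextR hnext using fun i y (hy : R (x i) y) => hR.step hy (htrans i)
  let y : ℕ → B.Q := Nat.rec B.init next
  have hy (i : ℕ) : R (x i) (y i) := by
    induction i with
    | zero => rw [hinit]; exact hR.init
    | succ i ih => exact hnextR i (y i) ih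
  exact hasAccRun_of_stuttering (x := y) rfl (fun i => hnext i (y i) (hy i)) fun c => hacc (φ c)

end TGBA

namespace Kripke

variable {α : Type} {T : Kripke α} {a b : Set T.S} {P P' : (α → Bool) → Prop}

theorem FSucc_mono (hab : a ⊆ b) (hP : ∀ ρ, P ρ → P' ρ) : T.FSucc a P ⊆ T.FSucc b P' :=
  fun _ ⟨s, hs, hΔ, hρ⟩ => ⟨s, hab hs, hΔ, hP _ hρ⟩

theorem subset_FReach : a ⊆ T.FReach a P :=
  Set.subset_sInter fun _ hb => hb.1

theorem FSucc_FReach_subset : T.FSucc (T.FReach a P) P ⊆ T.FReach a P :=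
  Set.subset_sInter fun _ hb =>
    (FSucc_mono (Set.sInter_subset_of_mem hb) fun _ => id).trans hb.2

end Kripke

section SelfLoopAggregation

variable {α : Type} {A : TGBA α} {T : Kripke α}

theorem SFpred_mono {q : A.Q} {ac ac' : Set A.F} (h : ac ⊆ ac') (ρ : α → Bool) :
    SFpred A q ac ρ → SFpred A q ac' ρ :=
  fun ⟨f, ac₀, hf, hac₀, hρ⟩ => ⟨f, ac₀, hf, hac₀.trans h, hρ⟩

theorem hasTransAc_synchProd {x x' : A.Q × T.S} {ac : Set A.F} :
    (synchProd A T).HasTransAc x ac x' ↔ (x.2, x'.2) ∈ T.Δ ∧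
      ∃ g : BForm α, (x.1, g, ac, x'.1) ∈ A.δ ∧ g.eval (T.lab x.2) = true := by
  constructor
  · rintro ⟨_, _, _, _, _, _, ht, h⟩
    cases ht
    exact h
  · exact fun h => ⟨_, _, _, _, _, _, rfl, h⟩

/-- The state `y` of `A ⊠ T` covers the state `x` of `A ⊗ T`: both have the same state `q` of `A`,
and the aggregate of `y` contains the Kripke state of `x` and is closed under the self-loops on `q`
without acceptance conditions. -/
structure SLAPCovers (A : TGBA α) (T : Kripke α) (x : A.Q × T.S) (y : A.Q × Set T.S) : Prop where
  fst_eq : y.1 = x.1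
  mem : x.2 ∈ y.2
  closed : T.FSucc y.2 (SFpred A y.1 ∅) ⊆ y.2

theorem SLAPCovers.of_mem {q : A.Q} {s : T.S} {a : Set T.S} (hs : s ∈ a) (ac : Set A.F) :
    SLAPCovers A T (q, s) (q, T.FReach a (SFpred A q ac)) where
  fst_eq := rfl
  mem := Kripke.subset_FReach hs
  closed := (Kripke.FSucc_mono subset_rfl (SFpred_mono (Set.empty_subset ac))).trans
    Kripke.FSucc_FReach_subset

theorem isStutterSimulation_synchProd_SLAP :
    TGBA.IsStutterSimulation (synchProd A T) (SLAP A T) id (SLAPCovers A T) where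
  init := SLAPCovers.of_mem (Set.mem_singleton T.init) ∅
  step := by
    rintro ⟨_, s⟩ ⟨q', s'⟩ ⟨q, a⟩ ac ⟨rfl, hs, hclosed⟩ htrans
    obtain ⟨hΔ, f, hf, hsat⟩ := hasTransAc_synchProd.1 htrans
    by_cases hloop : q = q' ∧ ac = ∅
    · obtain ⟨rfl, rfl⟩ := hloop
      have hs' : s' ∈ a := hclosed ⟨s, hs, hΔ, f, ∅, hf, subset_rfl, hsat⟩
      exact ⟨(q, a), ⟨rfl, hs', hclosed⟩, Or.inr ⟨rfl, rfl⟩⟩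
    · have hs' : s' ∈ T.FSucc a fun ρ => f.eval ρ = true := ⟨s, hs, hΔ, hsat⟩
      have hcov := SLAPCovers.of_mem (q := q') hs' ac
      exact ⟨_, hcov, Or.inl ⟨BForm.tru, q, q', a, _, ac, rfl, ⟨s, hs⟩, ⟨s', hcov.mem⟩,
        f, hf, not_and.1 hloop, rfl⟩⟩

end SelfLoopAggregation

theorem stmt13_general {α : Type} (A : TGBA α) (T : Kripke α) [Nonempty A.F] :
    (synchProd A T).HasAccRun → (SLAP A T).HasAccRun :=
  have : Nonempty (SLAP A T).F := ‹Nonempty A.F›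
  isStutterSimulation_synchProd_SLAP.hasAccRun

/-- If the synchronized product `A ⊗ T` has an accepting run,
then the Self-Loop Aggregation Product `A ⊠ T` has an accepting run. -/
theorem stmt13 {α : Type} (A : TGBA α) (T : Kripke α)
    [Finite A.Q] [Finite A.F] [Nonempty A.F] [Finite T.S]
    (hwf : A.WF) (hAP : A.AP ⊆ T.AP) :
    (synchProd A T).HasAccRun → (SLAP A T).HasAccRun :=
  stmt13_general A T
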